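/- Soundness of AnyCQ with a perfect predictor: let A be a type of assignments, Φ : A → Formula a family of quantifier-free formulas (the substituted matrices of a conjunctive Boolean query), v : ι → Bool a truth assignment and π̃ its perfect predictor. If T is a nonempty finite set of assignments (the assignments visited during the search) and the maximum over α ∈ T of S_π̃(Φ(α)) is strictly greater than 1/2, then there exists an assignment β ∈ T with B_v(Φ(β)) true; in particular the existentially quantified query is satisfied. -/

import Mathlib

/-- Quantifier-free formulas over atoms indexed by `ι`. -/
inductive Formula (ι : Type*) where
  | atom : ι → Formula ι
  | not : Formula ι → Formula ι
  | and : Formula ι → Formula ι → Formula ι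
  | or : Formula ι → Formula ι → Formula ι

/-- Gödel fuzzy score of a formula under an atom scoring function `π`. -/
noncomputable def Formula.score {ι : Type*} (π : ι → ℝ) : Formula ι → ℝ
  | .atom i => π i
  | .not φ => 1 - φ.score π
  | .and φ ψ => min (φ.score π) (ψ.score π)
  | .or φ ψ => max (φ.score π) (ψ.score π)

/-- Classical Boolean evaluation of a formula under a truth assignment `v`. -/
def Formula.eval {ι : Type*} (v : ι → Bool) : Formula ι → Bool
  | .atom i => v i
  | .not φ => !(φ.eval v)
  | .and φ ψ => φ.eval v && ψ.eval v
  | .or φ ψ => φ.eval v || ψ.eval v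

/-- The perfect predictor associated with a truth assignment `v`. -/
noncomputable def perfectPredictor {ι : Type*} (v : ι → Bool) : ι → ℝ :=
  fun i => if v i then 1 else 0

/-!
With a perfect predictor no atom is scored on the wrong side of `1 / 2`. Negation reflects scores in
`1 / 2` while `min` and `max` act on thresholds as `&&` and `||`, so the same holds for every
formula; and a maximum over a finite set exceeds `1 / 2` only if one of its terms does. Constraining
scores on both sides of `1 / 2` is what makes the induction go through negation.
-/

/-- The truth value read off the score `x` at the threshold `1 / 2` does not contradict `b`. The
score `1 / 2` itself is undecided, hence consistent with both truth values. -/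
def ThresholdConsistent (x : ℝ) (b : Bool) : Prop :=
  (1 / 2 < x → b = true) ∧ (x < 1 / 2 → b = false)

namespace ThresholdConsistent

variable {x y : ℝ} {a b : Bool}

theorem one_sub (h : ThresholdConsistent x a) : ThresholdConsistent (1 - x) (!a) := by
  constructor
  · intro hx
    have hxa : a = false := h.2 (by linarith)
    rw [hxa, Bool.not_false]
  · intro hx
    have hxa : a = true := h.1 (by linarith)
    rw [hxa, Bool.not_true]

protected theorem min (hx : ThresholdConsistent x a) (hy : ThresholdConsistent y b) :
    ThresholdConsistent (min x y) (a && b) := by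
  simp only [ThresholdConsistent, lt_min_iff, min_lt_iff, Bool.and_eq_true, Bool.and_eq_false_iff]
  exact ⟨And.imp hx.1 hy.1, Or.imp hx.2 hy.2⟩

protected theorem max (hx : ThresholdConsistent x a) (hy : ThresholdConsistent y b) :
    ThresholdConsistent (max x y) (a || b) := by
  simp only [ThresholdConsistent, lt_max_iff, max_lt_iff, Bool.or_eq_true, Bool.or_eq_false_iff]
  exact ⟨Or.imp hx.1 hy.1, And.imp hx.2 hy.2⟩

end ThresholdConsistent

theorem Formula.thresholdConsistent_score_eval {ι : Type*} {π : ι → ℝ} {v : ι → Bool}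
    (hπ : ∀ i, ThresholdConsistent (π i) (v i)) (φ : Formula ι) :
    ThresholdConsistent (φ.score π) (φ.eval v) := by
  induction φ with
  | atom i => exact hπ i
  | not φ ihφ => exact ihφ.one_sub
  | and φ ψ ihφ ihψ => exact ihφ.min ihψ
  | or φ ψ ihφ ihψ => exact ihφ.max ihψ

theorem thresholdConsistent_perfectPredictor {ι : Type*} (v : ι → Bool) (i : ι) :
    ThresholdConsistent (perfectPredictor v i) (v i) := by
  cases hv : v i <;> norm_num [ThresholdConsistent, perfectPredictor, hv]

theorem anycq_soundness_general {ι A : Type*} (Φ : A → Formula ι) {π : ι → ℝ} {v : ι → Bool}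
    (hπ : ∀ i, ThresholdConsistent (π i) (v i)) (T : Finset A) (hT : T.Nonempty)
    (h : 1 / 2 < T.sup' hT (fun α => (Φ α).score π)) :
    ∃ β ∈ T, (Φ β).eval v = true := by
  obtain ⟨β, hβT, hβ⟩ := (Finset.lt_sup'_iff hT).mp h
  exact ⟨β, hβT, ((Φ β).thresholdConsistent_score_eval hπ).1 hβ⟩

theorem anycq_soundness {ι A : Type*} (Φ : A → Formula ι) (v : ι → Bool)
    (T : Finset A) (hT : T.Nonempty)
    (h : 1 / 2 < T.sup' hT (fun α => (Φ α).score (perfectPredictor v))) :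
    ∃ β ∈ T, (Φ β).eval v = true :=
  anycq_soundness_general Φ (thresholdConsistent_perfectPredictor v) T hT h
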